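/- Let p be an odd prime, m ≥ 1, q a power of p, and a_1, ..., a_m ∈ F_p^* viewed in F_q, with D = F_n a subfield of F_q of size n. For a_0, b_0 ∈ D, let V = #{(x_1,...,x_m) ∈ D^m : Σ a_j x_j² = a_0 and Σ a_j x_j = b_0}. Then |V − n^{m−2}| ≤ n^{m/2}. -/

import Mathlib

/-!
Detect the two equations with a primitive additive character `ψ` of `D`: up to the factor `n ^ 2`,
the number of solutions is the sum over `(s, t) ∈ D × D` of the exponential sums
`∑ x, ψ (s * (∑ a_j x_j ^ 2 - a_0) + t * (∑ a_j x_j - b_0))`. The pair `(0, 0)` contributes the main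
term `n ^ m`. Every other exponential sum is a product of `m` one-variable sums over a nonzero
polynomial `u x ^ 2 + v x`, each of modulus `√n` if `u ≠ 0` (a quadratic Gauss sum) and zero
otherwise, so the remaining pairs contribute at most `n ^ 2 * √n ^ m`.
-/

open Finset

theorem norm_sum_addChar_mul_sub_add_mul_sub {R X : Type*} [CommRing R] [Finite R] [Fintype X]
    (ψ : AddChar R ℂ) (f g : X → R) (a b s t : R) :
    ‖∑ x, ψ (s * (f x - a) + t * (g x - b))‖ = ‖∑ x, ψ (s * f x + t * g x)‖ := by
  have factor (x : X) : ψ (s * (f x - a) + t * (g x - b)) =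
      ψ (-(s * a + t * b)) * ψ (s * f x + t * g x) := by
    rw [← AddChar.map_add_eq_mul]
    ring_nf
  simp only [factor, ← mul_sum, norm_mul, AddChar.norm_apply, one_mul]

section FiniteRing

variable {R : Type*} [CommRing R] [Fintype R] {ψ : AddChar R ℂ}

theorem sum_addChar_mul_add_mul (hψ : ψ.IsPrimitive) (u v : R) [Decidable (u = 0 ∧ v = 0)] :
    ∑ s : R × R, ψ (s.1 * u + s.2 * v) =
      if u = 0 ∧ v = 0 then (Fintype.card R : ℂ) ^ 2 else 0 := by
  classical
  simp only [AddChar.map_add_eq_mul, Fintype.sum_prod_type, ← sum_mul_sum,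
    AddChar.sum_mulShift _ hψ]
  by_cases hu : u = 0 <;> by_cases hv : v = 0 <;> simp [hu, hv, sq]

theorem sum_sum_addChar_eq_sq_mul_card {X : Type*} [Fintype X] (hψ : ψ.IsPrimitive)
    (f g : X → R) (a b : R) :
    ∑ s : R × R, ∑ x, ψ (s.1 * (f x - a) + s.2 * (g x - b)) =
      (Fintype.card R : ℂ) ^ 2 * Nat.card {x // f x = a ∧ g x = b} := by
  classical
  rw [sum_comm]
  simp only [sum_addChar_mul_add_mul hψ, sub_eq_zero, sum_ite, sum_const_zero, add_zero, sum_const,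
    nsmul_eq_mul, Nat.card_eq_fintype_card, Fintype.card_subtype, mul_comm]

theorem abs_sq_mul_card_sub_card_le {X : Type*} [Fintype X] (hψ : ψ.IsPrimitive) (f g : X → R)
    (a b : R) {B : ℝ} (hB : ∀ s t, (s, t) ≠ 0 → ‖∑ x, ψ (s * f x + t * g x)‖ ≤ B) :
    |(Fintype.card R : ℝ) ^ 2 * Nat.card {x // f x = a ∧ g x = b} - Fintype.card X| ≤
      ((Fintype.card R : ℝ) ^ 2 - 1) * B := by
  classical
  have split : (Fintype.card R : ℂ) ^ 2 * Nat.card {x // f x = a ∧ g x = b} - Fintype.card X =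
      ∑ s ∈ univ.erase (0 : R × R), ∑ x, ψ (s.1 * (f x - a) + s.2 * (g x - b)) := by
    rw [← sum_sum_addChar_eq_sq_mul_card hψ, ← add_sum_erase _ _ (mem_univ 0)]
    simp
  have card_erase : ((#(univ.erase (0 : R × R)) : ℕ) : ℝ) = (Fintype.card R : ℝ) ^ 2 - 1 := by
    rw [cast_card_erase_of_mem (mem_univ 0), card_univ, Fintype.card_prod, Nat.cast_mul, sq]
  calc |(Fintype.card R : ℝ) ^ 2 * Nat.card {x // f x = a ∧ g x = b} - Fintype.card X|
    _ = ‖∑ s ∈ univ.erase (0 : R × R), ∑ x, ψ (s.1 * (f x - a) + s.2 * (g x - b))‖ := by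
      rw [← split, ← Real.norm_eq_abs, ← Complex.norm_real]
      push_cast
      rfl
    _ ≤ ∑ _s ∈ univ.erase (0 : R × R), B := norm_sum_le_of_le _ fun _ hs => by
      rw [norm_sum_addChar_mul_sub_add_mul_sub]
      exact hB _ _ (ne_of_mem_erase hs)
    _ = ((Fintype.card R : ℝ) ^ 2 - 1) * B := by rw [sum_const, nsmul_eq_mul, card_erase]

theorem norm_sum_addChar_quadratic (hψ : ψ.IsPrimitive) {u : R} (hu : IsUnit (2 * u)) (v : R) :
    ‖∑ x, ψ (u * x ^ 2 + v * x)‖ = √(Fintype.card R) := by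
  classical
  set S := ∑ x, ψ (u * x ^ 2 + v * x)
  -- The substitution `x = y + h` makes the phase of `S * conj S` linear in `y`.
  have shift (y : R) : ∑ x, ψ (u * x ^ 2 + v * x) * (starRingEnd ℂ) (ψ (u * y ^ 2 + v * y)) =
      ∑ h, ψ (u * h ^ 2 + v * h) * ψ (y * (2 * u * h)) := by
    rw [← Equiv.sum_comp (Equiv.addRight y)]
    refine sum_congr rfl fun h _ => ?_
    rw [← AddChar.map_neg_eq_conj, ← AddChar.map_add_eq_mul, ← AddChar.map_add_eq_mul,
      Equiv.coe_addRight]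
    ring_nf
  have mul_conj : S * (starRingEnd ℂ) S = Fintype.card R := by
    calc S * (starRingEnd ℂ) S
      _ = ∑ y, ∑ h, ψ (u * h ^ 2 + v * h) * ψ (y * (2 * u * h)) := by
        simp only [S, map_sum, sum_mul_sum, ← shift]
        exact sum_comm
      _ = ∑ h, ψ (u * h ^ 2 + v * h) * if h = 0 then (Fintype.card R : ℂ) else 0 := by
        rw [sum_comm]
        simp only [← mul_sum, AddChar.sum_mulShift _ hψ, hu.mul_right_eq_zero, Nat.cast_ite,
          Nat.cast_zero]
      _ = Fintype.card R := by simp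
  have norm_sq : ‖S‖ ^ 2 = Fintype.card R := by
    rw [Complex.mul_conj, Complex.normSq_eq_norm_sq] at mul_conj
    exact_mod_cast mul_conj
  rw [← norm_sq, Real.sqrt_sq (norm_nonneg S)]

end FiniteRing

theorem addChar_sum_eq_prod {A M ι : Type*} [AddCommMonoid A] [CommMonoid M] (ψ : AddChar A M)
    (s : Finset ι) (f : ι → A) : ψ (∑ i ∈ s, f i) = ∏ i ∈ s, ψ (f i) :=
  map_prod ψ.toMonoidHom (fun i => Multiplicative.ofAdd (f i)) s

theorem sum_addChar_sum_eq_prod_sum {A M ι κ : Type*} [AddCommMonoid A] [CommSemiring M]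
    [Fintype ι] [DecidableEq ι] [Fintype κ] (ψ : AddChar A M) (f : ι → κ → A) :
    ∑ x : ι → κ, ψ (∑ i, f i (x i)) = ∏ i, ∑ y, ψ (f i y) := by
  simp only [addChar_sum_eq_prod, prod_univ_sum, Fintype.piFinset_univ]

section FiniteField

variable {K ι : Type*} [Field K] [Fintype K] [Fintype ι]

theorem norm_sum_addChar_quadratic_le {ψ : AddChar K ℂ} (hψ : ψ.IsPrimitive)
    (hK : ringChar K ≠ 2) {u v : K} (huv : u ≠ 0 ∨ v ≠ 0) :
    ‖∑ x, ψ (u * x ^ 2 + v * x)‖ ≤ √(Fintype.card K) := by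
  classical
  by_cases hu : u = 0
  · have linear_sum : ∑ x, ψ (u * x ^ 2 + v * x) = 0 := by
      simpa [hu, huv.resolve_left (not_not.2 hu), mul_comm] using AddChar.sum_mulShift v hψ
    simp [linear_sum]
  · exact (norm_sum_addChar_quadratic hψ
      (mul_ne_zero (Ring.two_ne_zero hK) hu).isUnit v).le

theorem norm_sum_addChar_diagonal_le [DecidableEq ι] {ψ : AddChar K ℂ} (hψ : ψ.IsPrimitive)
    (hK : ringChar K ≠ 2) {a b : ι → K} (ha : ∀ i, a i ≠ 0) (hb : ∀ i, b i ≠ 0) {s t : K}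
    (hst : (s, t) ≠ 0) :
    ‖∑ x : ι → K, ψ (s * ∑ i, a i * x i ^ 2 + t * ∑ i, b i * x i)‖ ≤
      √(Fintype.card K) ^ Fintype.card ι := by
  have coeff_ne_zero (i : ι) : s * a i ≠ 0 ∨ t * b i ≠ 0 := by
    simpa [ha i, hb i, Prod.ext_iff, imp_iff_not_or] using hst
  simp only [mul_sum, ← sum_add_distrib, ← mul_assoc]
  calc ‖∑ x : ι → K, ψ (∑ i, (s * a i * x i ^ 2 + t * b i * x i))‖
    _ = ∏ i, ‖∑ y, ψ (s * a i * y ^ 2 + t * b i * y)‖ := by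
      rw [sum_addChar_sum_eq_prod_sum ψ fun i y => s * a i * y ^ 2 + t * b i * y, norm_prod]
    _ ≤ ∏ _i : ι, √(Fintype.card K) := by
      gcongr with i
      exact norm_sum_addChar_quadratic_le hψ hK (coeff_ne_zero i)
    _ = √(Fintype.card K) ^ Fintype.card ι := by rw [prod_const, card_univ]

theorem abs_card_diagonal_quadratic_linear_sub_le (hK : ringChar K ≠ 2) {a b : ι → K}
    (ha : ∀ i, a i ≠ 0) (hb : ∀ i, b i ≠ 0) (a₀ b₀ : K) :
    |(Nat.card {x : ι → K // ∑ i, a i * x i ^ 2 = a₀ ∧ ∑ i, b i * x i = b₀} : ℝ)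
      - (Fintype.card K : ℝ) ^ ((Fintype.card ι : ℝ) - 2)| ≤
      (Fintype.card K : ℝ) ^ ((Fintype.card ι : ℝ) / 2) := by
  classical
  set V := Nat.card {x : ι → K // ∑ i, a i * x i ^ 2 = a₀ ∧ ∑ i, b i * x i = b₀}
  set n := (Fintype.card K : ℝ)
  set m := Fintype.card ι
  have n_pos : 0 < n := Nat.cast_pos.2 Fintype.card_pos
  have scaled_bound : |n ^ 2 * V - n ^ m| ≤ (n ^ 2 - 1) * √n ^ m := by
    have hψ := AddChar.FiniteField.primitiveChar_to_Complex_isPrimitive K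
    simpa only [Fintype.card_fun, Nat.cast_pow] using abs_sq_mul_card_sub_card_le hψ
      _ _ a₀ b₀ fun s t => norm_sum_addChar_diagonal_le hψ hK ha hb
  refine le_of_mul_le_mul_left ?_ (pow_pos n_pos 2)
  calc n ^ 2 * |V - n ^ ((m : ℝ) - 2)|
    _ = |n ^ 2 * V - n ^ m| := by
      rw [← abs_of_pos (pow_pos n_pos 2), ← abs_mul, abs_of_pos (pow_pos n_pos 2), mul_sub,
        Real.rpow_sub n_pos, Real.rpow_natCast, Real.rpow_two,
        mul_div_cancel₀ _ (pow_pos n_pos 2).ne']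
    _ ≤ (n ^ 2 - 1) * √n ^ m := scaled_bound
    _ ≤ n ^ 2 * √n ^ m := by gcongr; exact sub_le_self _ zero_le_one
    _ = n ^ 2 * n ^ ((m : ℝ) / 2) := by
      rw [Real.rpow_div_two_eq_sqrt _ n_pos.le, Real.rpow_natCast]

end FiniteField

theorem natCard_forall_mem_and {ι α : Type*} (s : Set α) (P : (ι → α) → Prop) :
    Nat.card {x : ι → α // (∀ i, x i ∈ s) ∧ P x} = Nat.card {x : ι → s // P fun i => x i} :=
  Nat.card_congr <| (Equiv.subtypeSubtypeEquivSubtypeInter _ P).symm.trans <|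
    Equiv.subtypePiEquivPi.subtypeEquiv fun _ => Iff.rfl

theorem natCast_ne_zero_of_pos_of_lt_char (R : Type*) [AddMonoidWithOne R] (p : ℕ) [CharP R p]
    {c : ℕ} (hc_pos : 0 < c) (hc_lt : c < p) : (c : R) ≠ 0 := by
  rw [Ne, CharP.cast_eq_zero_iff R p]
  exact Nat.not_dvd_of_pos_of_lt hc_pos hc_lt

theorem stmt19_general {F ι : Type*} [Field F] [Fintype ι] (hF : ringChar F ≠ 2)
    (D : Subfield F) [Finite D] {a b : ι → D} (ha : ∀ i, a i ≠ 0) (hb : ∀ i, b i ≠ 0)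
    (a₀ b₀ : D) :
    |(Nat.card {x : ι → F // (∀ i, x i ∈ D) ∧
        ∑ i, a i * x i ^ 2 = a₀ ∧ ∑ i, b i * x i = b₀} : ℝ)
      - (Nat.card D : ℝ) ^ ((Fintype.card ι : ℝ) - 2)| ≤
      (Nat.card D : ℝ) ^ ((Fintype.card ι : ℝ) / 2) := by
  have := Fintype.ofFinite D
  have hD : ringChar D ≠ 2 := by rwa [Algebra.ringChar_eq D F]
  have card_eq := natCard_forall_mem_and (D : Set F) fun x : ι → F =>
    ∑ i, a i * x i ^ 2 = (a₀ : F) ∧ ∑ i, b i * x i = (b₀ : F)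
  simp only [SetLike.mem_coe] at card_eq
  rw [card_eq, Nat.card_eq_fintype_card (α := D)]
  exact_mod_cast abs_card_diagonal_quadratic_linear_sub_le hD ha hb a₀ b₀

/-- Let `p` be an odd prime, `F_q` of characteristic `p`, `D` a subfield of `F_q` with
`|D| = n`, coefficients `a_1, …, a_m ∈ F_p^*` (nonzero elements of the prime field), and
`a_0, b_0 ∈ D`.  If `V` is the number of solutions `(x_1,…,x_m) ∈ D^m` of
`∑ a_j x_j² = a_0`, `∑ a_j x_j = b_0`, then `|V - n^{m-2}| ≤ n^{m/2}`. -/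
theorem stmt19 {F : Type*} [Field F] [Fintype F] (p : ℕ) (hp : p.Prime) (hodd : p ≠ 2)
    [CharP F p] (D : Subfield F) (n m : ℕ) (hn : Nat.card D = n) (hm : 1 ≤ m)
    (a : Fin m → F) (ha : ∀ j, ∃ c : ℕ, 0 < c ∧ c < p ∧ a j = (c : F))
    (a0 b0 : F) (ha0 : a0 ∈ D) (hb0 : b0 ∈ D) :
    |(Nat.card {x : Fin m → F // (∀ i, x i ∈ D) ∧
        (∑ i, a i * (x i) ^ 2 = a0) ∧ (∑ i, a i * x i = b0)} : ℝ)
      - (n : ℝ) ^ ((m : ℝ) - 2)| ≤ (n : ℝ) ^ ((m : ℝ) / 2) := by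
  choose c hc_pos hc_lt hc using ha
  have coeff_ne_zero (j : Fin m) : (c j : D) ≠ 0 :=
    natCast_ne_zero_of_pos_of_lt_char D p (hc_pos j) (hc_lt j)
  simpa [hn, hc] using stmt19_general (by rwa [ringChar.eq F p]) D coeff_ne_zero coeff_ne_zero
    ⟨a0, ha0⟩ ⟨b0, hb0⟩
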